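/- The ideal I_2(D) is a prime ideal of S if and only if gcd(d_i, d_j) = 1 for every 1 ≤ i < j ≤ m. -/

import Mathlib

open MvPolynomial

variable (K : Type*) [Field K]

/-- The binomial `f_{ij} = x_i^{d_i} y_j^{d_j} − x_j^{d_j} y_i^{d_i}` in
`S = K[x_1,…,x_m,y_1,…,y_m]`, where the variable `x_i` is `X (Sum.inl i)` and
`y_i` is `X (Sum.inr i)`. -/
noncomputable def fIJ {m : ℕ} (d : Fin m → ℕ) (i j : Fin m) :
    MvPolynomial (Fin m ⊕ Fin m) K :=
  X (Sum.inl i) ^ d i * X (Sum.inr j) ^ d j - X (Sum.inl j) ^ d j * X (Sum.inr i) ^ d i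

/-- The ideal `I_2(D)` generated by the `2`-minors `f_{ij}`, `i < j`. -/
noncomputable def I2D {m : ℕ} (d : Fin m → ℕ) : Ideal (MvPolynomial (Fin m ⊕ Fin m) K) :=
  Ideal.span {g | ∃ i j : Fin m, i < j ∧ g = fIJ K d i j}

/-- A binomial: a difference of two (monic) monomials. -/
def IsBinom {K : Type*} [Field K] {σ : Type*} (f : MvPolynomial σ K) : Prop :=
  ∃ u v : σ →₀ ℕ, f = monomial u 1 - monomial v 1

section Aux

theorem fIJ_mem {m : ℕ} (d : Fin m → ℕ) {i j : Fin m} (h : i ≠ j) : fIJ K d i j ∈ I2D K d := by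
  rcases lt_or_gt_of_ne h with h | h
  · exact Ideal.subset_span ⟨i, j, h, rfl⟩
  · have h1 : fIJ K d j i ∈ I2D K d := Ideal.subset_span ⟨j, i, h, rfl⟩
    have h2 : fIJ K d i j = - fIJ K d j i := by
      unfold fIJ; ring
    rw [h2]
    exact neg_mem h1

/-- The product of all `d k`, `k ≠ i`. -/
def cofac {m : ℕ} (d : Fin m → ℕ) (i : Fin m) : ℕ := ∏ k ∈ Finset.univ.erase i, d k

theorem cofac_mul {m : ℕ} (d : Fin m → ℕ) (i : Fin m) : d i * cofac d i = ∏ k, d k :=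
  Finset.mul_prod_erase _ _ (Finset.mem_univ i)

theorem dvd_cofac {m : ℕ} (d : Fin m → ℕ) {i j : Fin m} (h : i ≠ j) : d i ∣ cofac d j :=
  Finset.dvd_prod_of_mem _ (by simp [h])

theorem cofac_coprime {m : ℕ} (d : Fin m → ℕ)
    (hc : ∀ i j : Fin m, i < j → Nat.gcd (d i) (d j) = 1) (i : Fin m) :
    Nat.Coprime (d i) (cofac d i) := by
  refine Nat.Coprime.prod_right fun k hk => ?_
  have hk' : k ≠ i := (Finset.mem_erase.1 hk).1
  rcases lt_or_gt_of_ne hk' with h | h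
  · exact (Nat.coprime_comm).1 (hc k i h)
  · exact hc i k h

theorem dvd_of_sum {m : ℕ} (d : Fin m → ℕ)
    (hc : ∀ i j : Fin m, i < j → Nat.gcd (d i) (d j) = 1) (c : Fin m → ℤ)
    (h : ∑ k, c k * (cofac d k : ℤ) = 0) (i : Fin m) : (d i : ℤ) ∣ c i := by
  have h1 : (d i : ℤ) ∣ c i * (cofac d i : ℤ) := by
    rw [← Finset.add_sum_erase _ _ (Finset.mem_univ i)] at h
    have h2 : (d i : ℤ) ∣ ∑ k ∈ Finset.univ.erase i, c k * (cofac d k : ℤ) := by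
      refine Finset.dvd_sum fun k hk => ?_
      have hk' : k ≠ i := (Finset.mem_erase.1 hk).1
      exact Dvd.dvd.mul_left (Int.natCast_dvd_natCast.2 (dvd_cofac d hk'.symm)) _
    rw [eq_neg_of_add_eq_zero_left h]
    exact (dvd_neg).2 h2
  have h3 : IsCoprime (d i : ℤ) (cofac d i : ℤ) :=
    Nat.isCoprime_iff_coprime.2 (cofac_coprime d hc i)
  exact h3.dvd_of_dvd_mul_right h1

theorem exists_pos_of_sum {m : ℕ} (d : Fin m → ℕ) (hd : ∀ i, 0 < d i) (c : Fin m → ℤ)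
    (h : ∑ k, c k * (cofac d k : ℤ) = 0) (hne : c ≠ 0) : ∃ i, 0 < c i := by
  by_contra! hneg
  apply hne
  have hp : ∀ k, 0 < (cofac d k : ℤ) := fun k => by
    exact_mod_cast Finset.prod_pos fun k _ => hd k
  have := (Finset.sum_eq_zero_iff_of_nonpos (s := Finset.univ)
    (f := fun k => c k * (cofac d k : ℤ))
    (fun k _ => mul_nonpos_of_nonpos_of_nonneg (hneg k) (hp k).le)).1 h
  funext k
  exact (mul_eq_zero.1 (this k (Finset.mem_univ k))).resolve_right (hp k).ne'

theorem exists_neg_of_sum {m : ℕ} (d : Fin m → ℕ) (hd : ∀ i, 0 < d i) (c : Fin m → ℤ)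
    (h : ∑ k, c k * (cofac d k : ℤ) = 0) (hne : c ≠ 0) : ∃ i, c i < 0 := by
  obtain ⟨i, hi⟩ := exists_pos_of_sum d hd (-c) (by simp [h]) (neg_ne_zero.2 hne)
  exact ⟨i, by simpa using hi⟩

theorem monomial_congr {m : ℕ} (d : Fin m → ℕ) (hd : ∀ i, 0 < d i)
    (hc : ∀ i j : Fin m, i < j → Nat.gcd (d i) (d j) = 1) (n : ℕ) :
    ∀ u v : (Fin m ⊕ Fin m) →₀ ℕ,
    (∑ i, ((u (Sum.inl i) : ℤ) - v (Sum.inl i)).natAbs) = n →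
    (∀ i, u (Sum.inl i) + u (Sum.inr i) = v (Sum.inl i) + v (Sum.inr i)) →
    ∑ i, ((u (Sum.inl i) : ℤ) - v (Sum.inl i)) * (cofac d i : ℤ) = 0 →
    (monomial u (1 : K) - monomial v 1) ∈ I2D K d := by
  induction n using Nat.strong_induction_on with
  | _ n ih =>
  intro u v hn hs hw
  by_cases h0 : (fun i => (u (Sum.inl i) : ℤ) - v (Sum.inl i)) = 0
  · have : u = v := by
      ext s
      rcases s with i | i
      · have := congrFun h0 i
        simp only [Pi.zero_apply] at this
        omega
      · have := congrFun h0 i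
        have := hs i
        simp only [Pi.zero_apply] at *
        omega
    simp [this]
  obtain ⟨i, hi⟩ := exists_pos_of_sum d hd _ hw h0
  obtain ⟨j, hj⟩ := exists_neg_of_sum d hd _ hw h0
  have hdi := dvd_of_sum d hc _ hw i
  have hdj := dvd_of_sum d hc _ hw j
  have hij : i ≠ j := by rintro rfl; omega
  have hi' := Int.le_of_dvd hi hdi
  have hj' := Int.le_of_dvd (by omega) ((dvd_neg).2 hdj)
  have hsj := hs j
  have hsi := hs i
  have hpi := hd i
  have hpj := hd j
  obtain ⟨r, hr⟩ : ∃ r : (Fin m ⊕ Fin m) →₀ ℕ,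
      u = r + (Finsupp.single (Sum.inl i) (d i) + Finsupp.single (Sum.inr j) (d j)) := by
    refine ⟨u - (Finsupp.single (Sum.inl i) (d i) + Finsupp.single (Sum.inr j) (d j)),
      (tsub_add_cancel_of_le ?_).symm⟩
    intro s
    rcases s with k | k
    · by_cases hk : i = k
      · subst hk; simp; omega
      · simp [Finsupp.single_apply, hk]
    · by_cases hk : j = k
      · subst hk; simp; omega
      · simp [Finsupp.single_apply, hk]
  set u' := r + (Finsupp.single (Sum.inl j) (d j) + Finsupp.single (Sum.inr i) (d i)) with hu'
  have e1 : ∀ k, (u (Sum.inl k)) = r (Sum.inl k) + if i = k then d i else 0 := fun k => by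
    rw [hr]; simp [Finsupp.single_apply]
  have e2 : ∀ k, (u (Sum.inr k)) = r (Sum.inr k) + if j = k then d j else 0 := fun k => by
    rw [hr]; simp [Finsupp.single_apply]
  have e3 : ∀ k, (u' (Sum.inl k)) = r (Sum.inl k) + if j = k then d j else 0 := fun k => by
    rw [hu']; simp [Finsupp.single_apply]
  have e4 : ∀ k, (u' (Sum.inr k)) = r (Sum.inr k) + if i = k then d i else 0 := fun k => by
    rw [hu']; simp [Finsupp.single_apply]
  have key : monomial u (1 : K) - monomial u' 1 ∈ I2D K d := by
    have : monomial u (1 : K) - monomial u' 1 = monomial r 1 * fIJ K d i j := by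
      rw [hr, hu', fIJ, mul_sub]
      simp only [X_pow_eq_monomial, monomial_mul, mul_one]
    rw [this]
    exact Ideal.mul_mem_left _ _ (fIJ_mem K d hij)
  have key2 : monomial u' (1 : K) - monomial v 1 ∈ I2D K d := by
    refine ih (∑ i, ((u' (Sum.inl i) : ℤ) - v (Sum.inl i)).natAbs) ?_ u' v rfl ?_ ?_
    · rw [← hn]
      refine Finset.sum_lt_sum (fun k _ => ?_) ⟨i, Finset.mem_univ _, ?_⟩
      · have a1 := e1 k
        have a3 := e3 k
        by_cases h1 : i = k
        · subst h1
          simp only [if_true, hij.symm, if_false] at a1 a3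
          omega
        · by_cases h2 : j = k
          · subst h2
            simp only [if_true, hij, if_false] at a1 a3
            omega
          · simp only [h1, h2, if_false] at a1 a3
            omega
      · have a1 := e1 i
        have a3 := e3 i
        simp only [if_true, hij.symm, if_false] at a1 a3
        omega
    · intro k
      have a1 := e1 k
      have a2 := e2 k
      have a3 := e3 k
      have a4 := e4 k
      have := hs k
      split_ifs at * <;> omega
    · rw [← hw, ← sub_eq_zero, ← Finset.sum_sub_distrib]
      have : ∀ k, ((u' (Sum.inl k) : ℤ) - v (Sum.inl k)) * (cofac d k : ℤ)
          - ((u (Sum.inl k) : ℤ) - v (Sum.inl k)) * (cofac d k : ℤ)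
          = (if j = k then (d k : ℤ) * cofac d k else 0)
            - (if i = k then (d k : ℤ) * cofac d k else 0) := by
        intro k
        rw [e1 k, e3 k]
        push_cast
        split_ifs with h1 h2 h2
        · exact absurd (h2.trans h1.symm) hij
        · subst h1; ring
        · subst h2; ring
        · ring
      rw [Finset.sum_congr rfl fun k _ => this k, Finset.sum_sub_distrib]
      simp only [Finset.sum_ite_eq, Finset.mem_univ, if_true]
      have b1 := cofac_mul d i
      have b2 := cofac_mul d j
      rw [sub_eq_zero]
      exact_mod_cast b2.trans b1.symm
  have := add_mem key key2
  simpa using this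

/-- The exponent vector of the image of a variable under the toric parametrization. -/
noncomputable def expo {m : ℕ} (d : Fin m → ℕ) : Fin m ⊕ Fin m → (Option (Fin m) →₀ ℕ)
  | Sum.inl i => Finsupp.single (some i) 1 + Finsupp.single none (cofac d i)
  | Sum.inr i => Finsupp.single (some i) 1

/-- The exponent vector of the image of a monomial. -/
noncomputable def expoSum {m : ℕ} (d : Fin m → ℕ) (u : Fin m ⊕ Fin m →₀ ℕ) :
    Option (Fin m) →₀ ℕ := ∑ s, u s • expo d s

/-- The toric parametrization. -/
noncomputable def toric {m : ℕ} (d : Fin m → ℕ) :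
    MvPolynomial (Fin m ⊕ Fin m) K →ₐ[K] MvPolynomial (Option (Fin m)) K :=
  aeval fun s => monomial (expo d s) 1

theorem toric_monomial {m : ℕ} (d : Fin m → ℕ) (u : Fin m ⊕ Fin m →₀ ℕ) :
    toric K d (monomial u 1) = monomial (expoSum d u) 1 := by
  rw [toric, aeval_monomial, map_one, one_mul, Finsupp.prod_fintype _ _ (by simp), expoSum,
    monomial_sum_one]
  simp [monomial_pow]

theorem expoSum_some {m : ℕ} (d : Fin m → ℕ) (u : Fin m ⊕ Fin m →₀ ℕ) (i : Fin m) :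
    expoSum d u (some i) = u (Sum.inl i) + u (Sum.inr i) := by
  simp [expoSum, expo, Finsupp.single_apply]

theorem expoSum_none {m : ℕ} (d : Fin m → ℕ) (u : Fin m ⊕ Fin m →₀ ℕ) :
    expoSum d u none = ∑ i, u (Sum.inl i) * cofac d i := by
  simp [expoSum, expo]

theorem toric_ker {m : ℕ} (d : Fin m → ℕ) (hd : ∀ i, 0 < d i)
    (hc : ∀ i j : Fin m, i < j → Nat.gcd (d i) (d j) = 1) :
    RingHom.ker (toric K d) = I2D K d := by
  apply le_antisymm
  · intro p hp
    rw [RingHom.mem_ker] at hp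
    let g : (Option (Fin m) →₀ ℕ) → (MvPolynomial (Fin m ⊕ Fin m) K ⧸ I2D K d) := fun w =>
      Ideal.Quotient.mk _ (monomial (Function.invFun (expoSum d) w) 1)
    let ψ := (basisMonomials (Option (Fin m)) K).constr K g
    have hψ : ψ ∘ₗ (toric K d).toLinearMap = (Ideal.Quotient.mkₐ K (I2D K d)).toLinearMap := by
      refine (basisMonomials (Fin m ⊕ Fin m) K).ext fun u => ?_
      have h1 : ψ (monomial (expoSum d u) 1) = g (expoSum d u) := by
        have := (basisMonomials (Option (Fin m)) K).constr_basis K g (expoSum d u)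
        simpa [ψ] using this
      simp only [coe_basisMonomials, LinearMap.comp_apply, AlgHom.toLinearMap_apply,
        toric_monomial, h1, Ideal.Quotient.mkₐ_eq_mk, g]
      rw [Ideal.Quotient.eq]
      have h2 : expoSum d (Function.invFun (expoSum d) (expoSum d u)) = expoSum d u :=
        Function.invFun_eq ⟨u, rfl⟩
      generalize Function.invFun (expoSum d) (expoSum d u) = v at h2
      refine monomial_congr K d hd hc _ v u rfl (fun i => ?_) ?_
      · rw [← expoSum_some d, ← expoSum_some d, h2]
      · have h3 := congrArg (fun w => ((w none : ℕ) : ℤ)) h2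
        simp only [expoSum_none] at h3
        push_cast at h3
        simp only [sub_mul, Finset.sum_sub_distrib, h3, sub_self]
    have h4 := LinearMap.congr_fun hψ p
    simp only [LinearMap.comp_apply, AlgHom.toLinearMap_apply, hp, map_zero] at h4
    exact Ideal.Quotient.eq_zero_iff_mem.1 h4.symm
  · refine Ideal.span_le.2 ?_
    rintro _ ⟨i, j, hij, rfl⟩
    rw [SetLike.mem_coe, RingHom.mem_ker, fIJ]
    have b1 := cofac_mul d i
    have b2 := cofac_mul d j
    simp only [toric, map_sub, map_mul, map_pow, aeval_X, monomial_pow, monomial_mul, one_pow,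
      mul_one, expo]
    rw [sub_eq_zero]
    congr 1
    simp only [smul_add, Finsupp.smul_single, smul_eq_mul, b1, b2]
    ac_rfl

theorem forward {m : ℕ} (d : Fin m → ℕ) (hd : ∀ i, 0 < d i) (hI : (I2D K d).IsPrime)
    (i j : Fin m) (hij : i < j) : Nat.gcd (d i) (d j) = 1 := by
  by_contra hg
  obtain ⟨a, ha⟩ := Nat.gcd_dvd_left (d i) (d j)
  obtain ⟨b, hb⟩ := Nat.gcd_dvd_right (d i) (d j)
  set g := Nat.gcd (d i) (d j) with hgdef
  have hpi := hd i
  have hpj := hd j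
  have ha0 : a ≠ 0 := by rintro rfl; omega
  have hb0 : b ≠ 0 := by rintro rfl; omega
  have hg0 : g ≠ 0 := by
    intro h; rw [h] at ha; omega
  have hg1 : g - 1 ≠ 0 := by omega
  have hne := hij.ne
  set A : MvPolynomial (Fin m ⊕ Fin m) K := X (Sum.inl i) ^ a * X (Sum.inr j) ^ b with hA
  set B : MvPolynomial (Fin m ⊕ Fin m) K := X (Sum.inl j) ^ b * X (Sum.inr i) ^ a with hB
  set C : MvPolynomial (Fin m ⊕ Fin m) K := ∑ k ∈ Finset.range g, A ^ k * B ^ (g - 1 - k) with hC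
  have hf : C * (A - B) = fIJ K d i j := by
    rw [hC, (Commute.all A B).geom_sum₂_mul, fIJ, ha, hb, hA, hB]
    ring
  have hf0 : fIJ K d i j ≠ 0 := by
    intro h
    have := congrArg (eval (fun s => if s = Sum.inl i ∨ s = Sum.inr j then (1 : K) else 0)) h
    simp [fIJ, hne.symm, hne, hpi.ne', hpj.ne'] at this
  let ρ : MvPolynomial (Fin m ⊕ Fin m) K →ₐ[K] MvPolynomial (Fin m ⊕ Fin m) K :=
    aeval (Sum.elim (fun k => if k = i ∨ k = j then X (Sum.inl k) else 0)
      (fun k => if k = i ∨ k = j then X (Sum.inr k) else 0))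
  have hρ : ∀ p ∈ I2D K d, fIJ K d i j ∣ ρ p := by
    intro p hp
    have : I2D K d ≤ (Ideal.span {fIJ K d i j}).comap ρ := by
      refine Ideal.span_le.2 ?_
      rintro _ ⟨k, l, hkl, rfl⟩
      rw [SetLike.mem_coe, Ideal.mem_comap, Ideal.mem_span_singleton]
      have hpk := (hd k).ne'
      have hpl := (hd l).ne'
      by_cases hk : k = i ∨ k = j
      · by_cases hl : l = i ∨ l = j
        · have : k = i ∧ l = j := by
            rcases hk with rfl | rfl <;> rcases hl with rfl | rfl <;>
              first | exact ⟨rfl, rfl⟩ | exact absurd hkl (lt_irrefl _) | exact absurd hkl hij.asymm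
          obtain ⟨rfl, rfl⟩ := this
          simp [ρ, fIJ]
        · simp [ρ, fIJ, hl, hpl]
      · simp [ρ, fIJ, hk, hpk]
    exact Ideal.mem_span_singleton.1 (this hp)
  have hρA : ρ A = A := by simp [ρ, A]
  have hρB : ρ B = B := by simp [ρ, B]
  have hρC : ρ C = C := by simp [C, hρA, hρB]
  have hA0 : eval (0 : Fin m ⊕ Fin m → K) A = 0 := by simp [A, ha0]
  have hB0 : eval (0 : Fin m ⊕ Fin m → K) B = 0 := by simp [B, hb0]
  have hC0 : eval (0 : Fin m ⊕ Fin m → K) C = 0 := by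
    simp only [C, map_sum, map_mul, map_pow, hA0, hB0]
    refine Finset.sum_eq_zero fun k _ => ?_
    rcases Nat.eq_zero_or_pos k with rfl | hk
    · simp [hg1]
    · simp [hk.ne']
  have hmem : C * (A - B) ∈ I2D K d := hf ▸ fIJ_mem K d hne
  rcases hI.mem_or_mem hmem with h | h
  · obtain ⟨q, hq⟩ := hρ _ h
    rw [hρC, ← hf] at hq
    have hCne : C ≠ 0 := by rintro h; rw [h, zero_mul] at hf; exact hf0 hf.symm
    have : (A - B) * q = 1 := mul_left_cancel₀ hCne (by rw [← mul_assoc, ← hq, mul_one])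
    have := congrArg (eval (0 : Fin m ⊕ Fin m → K)) this
    rw [map_mul, map_sub, hA0, hB0, sub_zero, zero_mul, map_one] at this
    exact zero_ne_one this
  · obtain ⟨q, hq⟩ := hρ _ h
    rw [map_sub, hρA, hρB, ← hf] at hq
    have hCne : A - B ≠ 0 := by rintro h; rw [h, mul_zero] at hf; exact hf0 hf.symm
    have : C * q = 1 := mul_left_cancel₀ hCne (by rw [mul_one, ← mul_assoc, mul_comm _ C, ← hq])
    have := congrArg (eval (0 : Fin m ⊕ Fin m → K)) this
    rw [map_mul, hC0, zero_mul, map_one] at this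
    exact zero_ne_one this

end Aux

theorem stmt13 (m : ℕ) (hm : 2 ≤ m) (d : Fin m → ℕ) (hd : ∀ i, 0 < d i) :
    (I2D K d).IsPrime ↔ ∀ i j : Fin m, i < j → Nat.gcd (d i) (d j) = 1 := by
  constructor
  · intro hI i j hij
    exact forward K d hd hI i j hij
  · intro hc
    rw [← toric_ker K d hd hc]
    exact RingHom.ker_isPrime _
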